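/- Let T and S be bounded linear operators on H each admitting an A-adjoint. Then ω_A(TS) ≤ (1/2) · ω_A(ST) + (1/4) · ( ‖T‖_A · ‖S‖_A + ‖TS‖_A ). -/

import Mathlib

noncomputable section

open ContinuousLinearMap

variable {H : Type*} [NormedAddCommGroup H] [InnerProductSpace ℂ H] [CompleteSpace H]

/-- The semi-inner product induced by the positive operator `A`: `⟨x, y⟩_A := ⟨A x, y⟩`. -/
def innA (A : H →L[ℂ] H) (x y : H) : ℂ := inner ℂ (A x) y

/-- The seminorm induced by `A`: `‖x‖_A := ⟨x, x⟩_A ^ (1/2)`. -/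
def vnormA (A : H →L[ℂ] H) (x : H) : ℝ := Real.sqrt (innA A x x).re

/-- The `A`-operator seminorm: `‖T‖_A := sup {‖T x‖_A : ‖x‖_A = 1}`. -/
def opNormA (A T : H →L[ℂ] H) : ℝ :=
  sSup {c : ℝ | ∃ x : H, vnormA A x = 1 ∧ c = vnormA A (T x)}

/-- The `A`-numerical radius: `ω_A(T) := sup {|⟨T x, x⟩_A| : ‖x‖_A = 1}`. -/
def wA (A T : H →L[ℂ] H) : ℝ :=
  sSup {c : ℝ | ∃ x : H, vnormA A x = 1 ∧ c = ‖innA A (T x) x‖}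

/-- `T` admits an `A`-adjoint: there is a bounded operator `X` with `A X = T* A`. -/
def HasAAdjoint (A T : H →L[ℂ] H) : Prop :=
  ∃ X : H →L[ℂ] H, A ∘L X = adjoint T ∘L A

/-- `X` is the reduced `A`-adjoint `T^{♯_A}` of `T`: it solves `A X = T* A` and its range
is contained in the closure of the range of `A`. -/
def IsReducedAAdjoint (A T X : H →L[ℂ] H) : Prop :=
  (A ∘L X = adjoint T ∘L A) ∧ ∀ y : H, X y ∈ closure (Set.range A)

section Seminorm

variable {V K : Type*} [AddCommGroup V] [Module ℂ V] [NormedAddCommGroup K]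
  [InnerProductSpace ℂ K]

/-- `T` and `X` are formally adjoint for the semi-inner product `(x, y) ↦ ⟪J x, J y⟫`. -/
def IsFormalAdjoint (J : V →ₗ[ℂ] K) (T X : V →ₗ[ℂ] V) : Prop :=
  ∀ x y, inner ℂ (J (T x)) (J y) = inner ℂ (J x) (J (X y))

variable {J : V →ₗ[ℂ] K} {T S X Y : V →ₗ[ℂ] V}

namespace IsFormalAdjoint

theorem symm (h : IsFormalAdjoint J T X) : IsFormalAdjoint J X T := fun x y => by
  rw [← inner_conj_symm, ← h y x, inner_conj_symm]

theorem comp (hT : IsFormalAdjoint J T X) (hS : IsFormalAdjoint J S Y) :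
    IsFormalAdjoint J (T ∘ₗ S) (Y ∘ₗ X) := fun x y => by
  rw [LinearMap.comp_apply, LinearMap.comp_apply, hT, hS]

theorem smul (h : IsFormalAdjoint J T X) (c : ℂ) :
    IsFormalAdjoint J (c • T) (starRingEnd ℂ c • X) := fun x y => by
  simp only [LinearMap.smul_apply, map_smul, inner_smul_left, inner_smul_right, h x y]

theorem pow (h : IsFormalAdjoint J T X) (n : ℕ) : IsFormalAdjoint J (T ^ n) (X ^ n) := by
  induction n with
  | zero => exact fun x y => rfl
  | succ n ih =>
    intro x y
    rw [pow_succ, pow_succ', Module.End.mul_apply, Module.End.mul_apply, ih, h]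

theorem norm_sq_le (h : IsFormalAdjoint J T X) (x : V) :
    ‖J (T x)‖ ^ 2 ≤ ‖J (X (T x))‖ * ‖J x‖ := by
  have h1 := norm_inner_le_norm (𝕜 := ℂ) (J x) (J (X (T x)))
  rw [← h, inner_self_eq_norm_sq_to_K] at h1
  simpa [mul_comm] using h1

theorem norm_le {t : ℝ} (ht : 0 ≤ t) (h : IsFormalAdjoint J T X)
    (hT : ∀ x, ‖J (T x)‖ ≤ t * ‖J x‖) (x : V) : ‖J (X x)‖ ≤ t * ‖J x‖ := by
  rcases (norm_nonneg (J (X x))).eq_or_lt with h0 | h0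
  · rw [← h0]; positivity
  · have h1 := h.symm.norm_sq_le x
    have h2 := mul_le_mul_of_nonneg_right (hT (X x)) (norm_nonneg (J x))
    exact le_of_mul_le_mul_left (by linarith) h0

/-- A formally symmetric map with geometrically bounded orbits is bounded on unit vectors. -/
theorem norm_le_of_orbit_le {M C : ℝ} (hM : 0 < M) {x : V} (h : IsFormalAdjoint J T T)
    (hx : ‖J x‖ = 1) (hC : ∀ n : ℕ, ‖J ((T ^ n) x)‖ ≤ C * M ^ n) : ‖J (T x)‖ ≤ M := by
  have key : ∀ n : ℕ, ‖J (T x)‖ ^ (2 ^ n) ≤ ‖J ((T ^ (2 ^ n)) x)‖ := by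
    intro n
    induction n with
    | zero => simp
    | succ n ih =>
      have h1 := (h.pow (2 ^ n)).norm_sq_le x
      rw [hx, mul_one, ← Module.End.mul_apply, ← pow_add, ← two_mul, ← pow_succ'] at h1
      calc ‖J (T x)‖ ^ (2 ^ (n + 1)) = (‖J (T x)‖ ^ (2 ^ n)) ^ 2 := by rw [pow_succ, pow_mul]
        _ ≤ ‖J ((T ^ (2 ^ n)) x)‖ ^ 2 := by gcongr
        _ ≤ _ := h1
  by_contra! hlt
  obtain ⟨n, hn⟩ := pow_unbounded_of_one_lt C ((one_lt_div hM).2 hlt)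
  have h1 : (‖J (T x)‖ / M) ^ n ≤ (‖J (T x)‖ / M) ^ (2 ^ n) :=
    pow_le_pow_right₀ ((one_lt_div hM).2 hlt).le Nat.lt_two_pow_self.le
  have h2 : (‖J (T x)‖ / M) ^ (2 ^ n) ≤ C := by
    rw [div_pow, div_le_iff₀ (by positivity)]
    exact (key n).trans (hC _)
  linarith

/-- A formally symmetric map is bounded by its numerical radius. -/
theorem norm_le_of_numericalRadius_le {ω : ℝ} (hω : 0 < ω) (h : IsFormalAdjoint J T T)
    (hT : ∀ x, ‖inner ℂ (J (T x)) (J x)‖ ≤ ω * ‖J x‖ ^ 2) {x : V} (hx : ‖J x‖ = 1) :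
    ‖J (T x)‖ ≤ ω := by
  set y : V := ((ω⁻¹ : ℝ) : ℂ) • T x with hy
  have e1 := (Complex.abs_re_le_norm _).trans (hT (x + y))
  have e2 := (Complex.abs_re_le_norm _).trans (hT (x - y))
  have hJy : J y = ((ω⁻¹ : ℝ) : ℂ) • J (T x) := by simp [hy]
  have hin : (inner ℂ (J (T x)) (J y)).re = ω⁻¹ * ‖J (T x)‖ ^ 2 := by
    rw [hJy, inner_smul_right, inner_self_eq_norm_sq_to_K, Complex.re_ofReal_mul]
    norm_cast
  have hin2 : (inner ℂ (J (T y)) (J x)).re = ω⁻¹ * ‖J (T x)‖ ^ 2 := by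
    rw [h, ← inner_conj_symm, Complex.conj_re, hin]
  have hny : ‖J y‖ = ω⁻¹ * ‖J (T x)‖ := by
    rw [hJy, norm_smul, Complex.norm_real, Real.norm_of_nonneg (by positivity)]
  have hpar := parallelogram_law_with_norm ℂ (J x) (J y)
  have e1' := (abs_le.1 e1).2
  have e2' := (abs_le.1 e2).1
  simp only [map_add, map_sub, inner_add_left, inner_add_right, inner_sub_left, inner_sub_right,
    Complex.add_re, Complex.sub_re, hin, hin2] at e1' e2'
  rw [hx, hny] at hpar
  have h3 : 4 * (ω⁻¹ * ‖J (T x)‖ ^ 2) ≤ 2 * ω * (1 + (ω⁻¹ * ‖J (T x)‖) ^ 2) := by nlinarith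
  have h4 : ‖J (T x)‖ ^ 2 ≤ ω ^ 2 := by
    field_simp at h3
    nlinarith
  exact (sq_le_sq₀ (norm_nonneg _) hω.le).1 h4

end IsFormalAdjoint

/-- The quadratic form of `T* T + S S*` is bounded by `τ² + p`, where `τ` bounds `T` and `S`,
and `p` bounds `T S`. -/
theorem norm_sq_add_norm_sq_le {τ p : ℝ} (hτ : 0 ≤ τ) (hp : 0 ≤ p)
    (hTX : IsFormalAdjoint J T X) (hSY : IsFormalAdjoint J S Y)
    (hT : ∀ x, ‖J (T x)‖ ≤ τ * ‖J x‖) (hS : ∀ x, ‖J (S x)‖ ≤ τ * ‖J x‖)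
    (hTS : ∀ x, ‖J (T (S x))‖ ≤ p * ‖J x‖) (v : V) :
    ‖J (T v)‖ ^ 2 + ‖J (Y v)‖ ^ 2 ≤ (τ ^ 2 + p) * ‖J v‖ ^ 2 := by
  set a := T v with ha
  set b := Y v with hb
  set g := ‖J a‖ ^ 2 + ‖J b‖ ^ 2 with hg
  have hXa := hTX.norm_le hτ hT a
  have hSb := hS b
  have hcross : (inner ℂ (J (X a)) (J (S b))).re ≤ p * (‖J a‖ * ‖J b‖) := by
    rw [hTX.symm]
    refine (Complex.re_le_norm _).trans ((norm_inner_le_norm _ _).trans ?_)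
    nlinarith [hTS b, norm_nonneg (J a)]
  have hz : ‖J (X a) + J (S b)‖ ^ 2 ≤ (τ ^ 2 + p) * g := by
    rw [norm_add_sq (𝕜 := ℂ)]
    have h1 : ‖J (X a)‖ ^ 2 ≤ (τ * ‖J a‖) ^ 2 := by gcongr
    have h2 : ‖J (S b)‖ ^ 2 ≤ (τ * ‖J b‖) ^ 2 := by gcongr
    have h3 := mul_le_mul_of_nonneg_left (two_mul_le_add_sq ‖J a‖ ‖J b‖) hp
    simp only [RCLike.re_eq_complex_re]
    nlinarith
  have hgz : g ≤ ‖J (X a) + J (S b)‖ * ‖J v‖ := by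
    refine le_trans (le_of_eq ?_) ((Complex.re_le_norm _).trans (norm_inner_le_norm _ _))
    rw [inner_add_left, hTX.symm, hSY, ← ha, ← hb, inner_self_eq_norm_sq_to_K,
      inner_self_eq_norm_sq_to_K, hg]
    norm_cast
  have hg0 : 0 ≤ g := by positivity
  rcases hg0.eq_or_lt with h0 | h0
  · rw [← h0]; positivity
  · have h1 : g ^ 2 ≤ (‖J (X a) + J (S b)‖ * ‖J v‖) ^ 2 := by gcongr
    rw [mul_pow] at h1
    have h2 := mul_le_mul_of_nonneg_right hz (sq_nonneg ‖J v‖)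
    exact le_of_mul_le_mul_left (by nlinarith) h0

/-- Bound for the quadratic form of the block operator `[ST, SS*; T*T, T*S*]`. -/
theorem re_block_inner_le {τ p w : ℝ} (hτ : 0 ≤ τ) (hp : 0 ≤ p)
    (hTX : IsFormalAdjoint J T X) (hSY : IsFormalAdjoint J S Y)
    (hT : ∀ x, ‖J (T x)‖ ≤ τ * ‖J x‖) (hS : ∀ x, ‖J (S x)‖ ≤ τ * ‖J x‖)
    (hTS : ∀ x, ‖J (T (S x))‖ ≤ p * ‖J x‖)
    (hw : ∀ x, ‖inner ℂ (J (S (T x))) (J x)‖ ≤ w * ‖J x‖ ^ 2) (u v : V) :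
    (inner ℂ (J (S (T u + Y v))) (J u)).re + (inner ℂ (J (X (T u + Y v))) (J v)).re ≤
      (w + (τ ^ 2 + p) / 2) * (‖J u‖ ^ 2 + ‖J v‖ ^ 2) := by
  simp only [map_add, inner_add_left, Complex.add_re]
  have h1 := (Complex.re_le_norm _).trans (hw u)
  have h2 : (inner ℂ (J (X (Y v))) (J v)).re ≤ w * ‖J v‖ ^ 2 := by
    rw [hTX.symm, hSY.symm, ← inner_conj_symm, Complex.conj_re]
    exact (Complex.re_le_norm _).trans (hw v)
  have h3 : (inner ℂ (J (S (Y v))) (J u)).re ≤ ‖J (Y v)‖ * ‖J (Y u)‖ := by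
    rw [hSY]
    exact (Complex.re_le_norm _).trans (norm_inner_le_norm _ _)
  have h4 : (inner ℂ (J (X (T u))) (J v)).re ≤ ‖J (T u)‖ * ‖J (T v)‖ := by
    rw [hTX.symm]
    exact (Complex.re_le_norm _).trans (norm_inner_le_norm _ _)
  have h5 := norm_sq_add_norm_sq_le hτ hp hTX hSY hT hS hTS u
  have h6 := norm_sq_add_norm_sq_le hτ hp hTX hSY hT hS hTS v
  nlinarith [two_mul_le_add_sq ‖J (Y v)‖ ‖J (Y u)‖, two_mul_le_add_sq ‖J (T u)‖ ‖J (T v)‖]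

/-- If `x` is a unit vector at which `⟪T S x, x⟫` almost attains the numerical radius `ω` of
`T S`, then `ω` almost satisfies the product bound. -/
theorem numericalRadius_approx_le {τ p w ω ε : ℝ} (hτ : 0 ≤ τ) (hp : 0 ≤ p) (hω : 0 < ω)
    (hTX : IsFormalAdjoint J T X) (hSY : IsFormalAdjoint J S Y)
    (hT : ∀ x, ‖J (T x)‖ ≤ τ * ‖J x‖) (hS : ∀ x, ‖J (S x)‖ ≤ τ * ‖J x‖)
    (hTS : ∀ x, ‖J (T (S x))‖ ≤ p * ‖J x‖)
    (hw : ∀ x, ‖inner ℂ (J (S (T x))) (J x)‖ ≤ w * ‖J x‖ ^ 2)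
    (hωTS : ∀ x, ‖inner ℂ (J (T (S x))) (J x)‖ ≤ ω * ‖J x‖ ^ 2)
    (hlt : w / 2 + (τ ^ 2 + p) / 4 < ω) {x : V} (hx : ‖J x‖ = 1)
    (hε : ω - ε ≤ (inner ℂ (J (T (S x))) (J x)).re) :
    (ω - (w / 2 + (τ ^ 2 + p) / 4)) * (2 * (ω - ε)) ≤ 2 * τ ^ 2 * √(2 * ω * ε) := by
  set D : V →ₗ[ℂ] V := (2⁻¹ : ℂ) • (T ∘ₗ S + Y ∘ₗ X)
  have hDapp : ∀ z, D z = (2⁻¹ : ℂ) • (T (S z) + Y (X z)) := fun z => rfl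
  have hDD : IsFormalAdjoint J D D := by
    intro y z
    have e1 := hTX.comp hSY y z
    have e2 := (hTX.comp hSY).symm y z
    simp only [LinearMap.comp_apply] at e1 e2
    simp only [hDapp, map_smul, map_add, inner_smul_left, inner_smul_right, inner_add_left,
      inner_add_right, e1, e2]
    rw [map_inv₀, map_ofNat, add_comm]
  have hre : ∀ z, inner ℂ (J (D z)) (J z) = ((inner ℂ (J (T (S z))) (J z)).re : ℂ) := by
    intro z
    have e2 := (hTX.comp hSY).symm z z
    simp only [LinearMap.comp_apply] at e2
    rw [hDapp, map_smul, map_add, inner_smul_left, inner_add_left, e2,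
      ← inner_conj_symm (J z), Complex.add_conj, map_inv₀, map_ofNat]
    simp
  have hDω : ∀ z, ‖inner ℂ (J (D z)) (J z)‖ ≤ ω * ‖J z‖ ^ 2 := fun z => by
    rw [hre, Complex.norm_real]
    exact (Complex.abs_re_le_norm _).trans (hωTS z)
  have hDx := hDD.norm_le_of_numericalRadius_le hω hDω hx
  set r : V := D x - (ω : ℂ) • x with hr
  have hrn : ‖J r‖ ≤ √(2 * ω * ε) := by
    refine Real.le_sqrt_of_sq_le ?_
    have hJr : J r = J (D x) - (ω : ℂ) • J x := by simp [hr]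
    have h1 : ‖J (D x)‖ ^ 2 ≤ ω ^ 2 := by gcongr
    rw [hJr, norm_sub_sq (𝕜 := ℂ), inner_smul_right, hre, norm_smul, hx, Complex.norm_real,
      Real.norm_of_nonneg hω.le]
    simp only [RCLike.re_eq_complex_re, ← Complex.ofReal_mul, Complex.ofReal_re]
    nlinarith
  have hDr : D x = r + (ω : ℂ) • x := by simp [hr]
  have hsum : T (S x) + Y (X x) = (2 : ℂ) • (r + (ω : ℂ) • x) := by
    rw [← hDr, hDapp, smul_smul]; simp
  have hb := re_block_inner_le hτ hp hTX hSY hT hS hTS hw (S x) (X x)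
  have hself : ∀ z : K, (inner ℂ z z).re = ‖z‖ ^ 2 := fun z => by
    rw [inner_self_eq_norm_sq_to_K]; norm_cast
  rw [hsum] at hb
  simp only [map_smul, map_add, inner_smul_left, inner_add_left, Complex.conj_ofReal,
    map_ofNat] at hb
  rw [← Complex.ofReal_ofNat, Complex.re_ofReal_mul, Complex.re_ofReal_mul] at hb
  simp only [Complex.add_re, Complex.re_ofReal_mul, hself] at hb
  have hX := hTX.norm_le hτ hT
  have herr : ∀ Z : V →ₗ[ℂ] V, (∀ z, ‖J (Z z)‖ ≤ τ * ‖J z‖) →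
      -(τ ^ 2 * ‖J r‖) ≤ (inner ℂ (J (Z r)) (J (Z x))).re := by
    intro Z hZ
    have h1 := ((Complex.abs_re_le_norm _).trans
      (norm_inner_le_norm (𝕜 := ℂ) (J (Z r)) (J (Z x))))
    have h2 : ‖J (Z r)‖ * ‖J (Z x)‖ ≤ (τ * ‖J r‖) * (τ * ‖J x‖) := by
      gcongr
      · exact hZ r
      · exact hZ x
    rw [hx] at h2
    linarith [(abs_le.1 h1).1]
  have hlow : 2 * (ω - ε) ≤ ‖J (S x)‖ ^ 2 + ‖J (X x)‖ ^ 2 := by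
    rw [hTX] at hε
    have h1 := (Complex.re_le_norm _).trans
      (norm_inner_le_norm (𝕜 := ℂ) (J (S x)) (J (X x)))
    nlinarith [two_mul_le_add_sq ‖J (S x)‖ ‖J (X x)‖]
  calc _ ≤ (ω - (w / 2 + (τ ^ 2 + p) / 4)) * (‖J (S x)‖ ^ 2 + ‖J (X x)‖ ^ 2) :=
        mul_le_mul_of_nonneg_left hlow (sub_pos.2 hlt).le
    _ ≤ 2 * τ ^ 2 * ‖J r‖ := by linarith [herr S hS, herr X hX]
    _ ≤ _ := by gcongr

/-- Product bound for the numerical radius with respect to a semi-inner product. -/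
theorem numericalRadius_mul_le {t s p w ω : ℝ} (ht : 0 < t) (hs : 0 < s) (hp : 0 ≤ p)
    (hω : 0 < ω) (hTX : IsFormalAdjoint J T X) (hSY : IsFormalAdjoint J S Y)
    (hT : ∀ x, ‖J (T x)‖ ≤ t * ‖J x‖) (hS : ∀ x, ‖J (S x)‖ ≤ s * ‖J x‖)
    (hTS : ∀ x, ‖J (T (S x))‖ ≤ p * ‖J x‖)
    (hw : ∀ x, ‖inner ℂ (J (S (T x))) (J x)‖ ≤ w * ‖J x‖ ^ 2)
    (hωTS : ∀ x, ‖inner ℂ (J (T (S x))) (J x)‖ ≤ ω * ‖J x‖ ^ 2)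
    (happ : ∀ ε > 0, ∃ x, ‖J x‖ = 1 ∧ ω - ε ≤ ‖inner ℂ (J (T (S x))) (J x)‖) :
    ω ≤ w / 2 + (t * s + p) / 4 := by
  by_contra! hlt
  set δ := ω - (w / 2 + (t * s + p) / 4)
  have hδ0 : 0 < δ := sub_pos.2 hlt
  have key : ∀ ε > 0, δ * (2 * (ω - ε)) ≤ 2 * (t * s) * √(2 * ω * ε) := by
    intro ε hε
    obtain ⟨x, hx, hxε⟩ := happ ε hε
    set k : ℝ := √(s / t) with hk
    have hk0 : 0 < k := by positivity
    have hk2 : k ^ 2 = s / t := Real.sq_sqrt (by positivity)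
    have hτ2 : √(t * s) ^ 2 = t * s := Real.sq_sqrt (by positivity)
    have hkt : k * t = √(t * s) := by
      rw [eq_comm, Real.sqrt_eq_iff_mul_self_eq (by positivity) (by positivity)]
      have : k * t * (k * t) = k ^ 2 * t ^ 2 := by ring
      rw [this, hk2]; field_simp
    have hks : k⁻¹ * s = √(t * s) := by
      rw [← hkt, inv_mul_eq_iff_eq_mul₀ hk0.ne']
      have : k * (k * t) = k ^ 2 * t := by ring
      rw [this, hk2]; field_simp
    obtain ⟨c, hc, hcx⟩ : ∃ c : ℂ, ‖c‖ = 1 ∧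
        starRingEnd ℂ c * inner ℂ (J (T (S x))) (J x) = ‖inner ℂ (J (T (S x))) (J x)‖ := by
      obtain ⟨d, hd, hdx⟩ := RCLike.exists_norm_eq_mul_self (inner ℂ (J (T (S x))) (J x))
      exact ⟨starRingEnd ℂ d, by rwa [RCLike.norm_conj], by rw [Complex.conj_conj]; exact hdx.symm⟩
    have hkc : (k : ℂ) ≠ 0 := by exact_mod_cast hk0.ne'
    have hcancel : ∀ z : K, (c * k) • ((k : ℂ)⁻¹ • z) = c • z := fun z => by
      rw [smul_smul, mul_assoc, mul_inv_cancel₀ hkc, mul_one]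
    have hcancel' : ∀ z : K, (k : ℂ)⁻¹ • ((c * k) • z) = c • z := fun z => by
      rw [smul_comm, hcancel]
    have h := numericalRadius_approx_le (J := J) (T := (c * k) • T) (S := (k : ℂ)⁻¹ • S)
      (τ := √(t * s)) (p := p) (w := w) (ω := ω) (ε := ε) (Real.sqrt_nonneg _) hp hω
      (hTX.smul _) (hSY.smul _)
      (fun z => by
        simp only [LinearMap.smul_apply, map_smul, norm_smul, norm_mul, hc, Complex.norm_real,
          Real.norm_of_nonneg hk0.le, one_mul]
        rw [← hkt, mul_assoc]
        exact mul_le_mul_of_nonneg_left (hT z) hk0.le)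
      (fun z => by
        simp only [LinearMap.smul_apply, map_smul, norm_smul, norm_inv, Complex.norm_real,
          Real.norm_of_nonneg hk0.le]
        rw [← hks, mul_assoc]
        exact mul_le_mul_of_nonneg_left (hS z) (by positivity))
      (fun z => by
        simp only [LinearMap.smul_apply, map_smul, hcancel', norm_smul, hc, one_mul]
        exact hTS z)
      (fun z => by
        simp only [LinearMap.smul_apply, map_smul, hcancel, inner_smul_left, norm_mul,
          RCLike.norm_conj, hc, one_mul]
        exact hw z)
      (fun z => by
        simp only [LinearMap.smul_apply, map_smul, hcancel', inner_smul_left, norm_mul,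
          RCLike.norm_conj, hc, one_mul]
        exact hωTS z)
      (by rwa [hτ2]) hx
      (by
        simp only [LinearMap.smul_apply, map_smul, hcancel', inner_smul_left]
        rw [hcx, Complex.ofReal_re]
        exact hxε)
    rwa [hτ2] at h
  have hlim : Filter.Tendsto (fun ε : ℝ => 2 * (t * s) * √(2 * ω * ε) - δ * (2 * (ω - ε)))
      (nhdsWithin 0 (Set.Ioi 0)) (nhds (2 * (t * s) * √(2 * ω * 0) - δ * (2 * (ω - 0)))) :=
    (Continuous.tendsto (by fun_prop) 0).mono_left nhdsWithin_le_nhds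
  have h0 := ge_of_tendsto hlim
    (Filter.eventually_of_mem self_mem_nhdsWithin fun ε hε => sub_nonneg.2 (key ε hε))
  simp only [mul_zero, Real.sqrt_zero, sub_zero, zero_sub] at h0
  nlinarith [mul_pos hδ0 hω]

end Seminorm

section Operators

variable {A B : H →L[ℂ] H}

theorem innA_eq_inner_sqrt (hA : A.IsPositive) (x y : H) :
    innA A x y = inner ℂ (CFC.sqrt A x) (CFC.sqrt A y) := by
  have h0 : 0 ≤ A := (nonneg_iff_isPositive A).2 hA
  have hs : IsSelfAdjoint (CFC.sqrt A) := IsSelfAdjoint.of_nonneg (CFC.sqrt_nonneg A)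
  have h1 : A x = CFC.sqrt A (CFC.sqrt A x) := by
    conv_lhs => rw [← CFC.sqrt_mul_sqrt_self A h0]
    rfl
  rw [innA, h1, ← adjoint_inner_right, hs.adjoint_eq]

theorem vnormA_eq_norm_sqrt (hA : A.IsPositive) (x : H) :
    vnormA A x = ‖CFC.sqrt A x‖ := by
  rw [vnormA, innA_eq_inner_sqrt hA, inner_self_eq_norm_sq_to_K]
  norm_cast
  exact Real.sqrt_sq (norm_nonneg _)

theorem HasAAdjoint.exists_isFormalAdjoint (hA : A.IsPositive) (hB : HasAAdjoint A B) :
    ∃ X : H →L[ℂ] H, IsFormalAdjoint ((CFC.sqrt A : H →L[ℂ] H) : H →ₗ[ℂ] H) B X := by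
  obtain ⟨X, hX⟩ := hB
  refine ⟨X, fun x y => ?_⟩
  have h1 := DFunLike.congr_fun hX y
  simp only [comp_apply] at h1
  have h2 : innA A x (X y) = innA A (B x) y := by
    rw [innA, innA, hA.isSymmetric.apply_clm, h1, adjoint_inner_right,
      ← hA.isSymmetric.apply_clm]
  rw [innA_eq_inner_sqrt hA, innA_eq_inner_sqrt hA] at h2
  exact h2.symm

theorem HasAAdjoint.mul {C : H →L[ℂ] H} (hB : HasAAdjoint A B) (hC : HasAAdjoint A C) :
    HasAAdjoint A (B * C) := by
  obtain ⟨X, hX⟩ := hB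
  obtain ⟨Y, hY⟩ := hC
  refine ⟨Y * X, ?_⟩
  simp only [mul_def, adjoint_comp] at *
  rw [← comp_assoc, hY, comp_assoc, hX, comp_assoc]

theorem opNormA_nonneg (A B : H →L[ℂ] H) : 0 ≤ opNormA A B :=
  Real.sSup_nonneg fun _ ⟨_, _, hc⟩ => hc ▸ Real.sqrt_nonneg _

theorem wA_nonneg (A B : H →L[ℂ] H) : 0 ≤ wA A B :=
  Real.sSup_nonneg fun _ ⟨_, _, hc⟩ => hc ▸ norm_nonneg _

/-- An operator admitting an `A`-adjoint is bounded for the seminorm induced by `A`. -/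
theorem HasAAdjoint.exists_norm_sqrt_le (hA : A.IsPositive) (hB : HasAAdjoint A B) :
    ∃ M, ∀ x, ‖CFC.sqrt A x‖ = 1 → ‖CFC.sqrt A (B x)‖ ≤ M := by
  obtain ⟨X, hX⟩ := hB.exists_isFormalAdjoint hA
  refine ⟨√(‖X * B‖ + 1), fun x hx => Real.le_sqrt_of_sq_le ?_⟩
  have h1 := hX.norm_sq_le x
  have h2 := (hX.symm.comp hX).norm_le_of_orbit_le (M := ‖X * B‖ + 1)
    (C := ‖CFC.sqrt A‖ * ‖x‖) (by positivity) (x := x) hx fun n => by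
      have e : (((X : H →ₗ[ℂ] H) ∘ₗ (B : H →ₗ[ℂ] H)) ^ n) x = ((X * B) ^ n) x := by
        change (((X * B : H →L[ℂ] H) : H →ₗ[ℂ] H) ^ n) x = _
        rw [← toLinearMap_pow]; rfl
      rw [e]
      calc ‖CFC.sqrt A (((X * B) ^ n) x)‖ ≤ ‖CFC.sqrt A‖ * (‖(X * B) ^ n‖ * ‖x‖) :=
            (le_opNorm _ _).trans (by gcongr; exact le_opNorm _ _)
        _ ≤ ‖CFC.sqrt A‖ * ((‖X * B‖ + 1) ^ n * ‖x‖) := by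
            gcongr
            rcases Nat.eq_zero_or_pos n with rfl | hn
            · rw [pow_zero, pow_zero]; exact norm_id_le
            · exact (norm_pow_le' _ hn).trans (by gcongr; linarith)
        _ = _ := by ring
  rw [show ‖((CFC.sqrt A : H →L[ℂ] H) : H →ₗ[ℂ] H) x‖ = 1 from hx, mul_one] at h1
  exact h1.trans h2

theorem HasAAdjoint.norm_sqrt_le (hA : A.IsPositive) (hB : HasAAdjoint A B) (x : H) :
    ‖CFC.sqrt A (B x)‖ ≤ opNormA A B * ‖CFC.sqrt A x‖ := by
  obtain ⟨M, hM⟩ := hB.exists_norm_sqrt_le hA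
  have hbdd : BddAbove {c : ℝ | ∃ x : H, vnormA A x = 1 ∧ c = vnormA A (B x)} := by
    refine ⟨M, ?_⟩
    rintro _ ⟨y, hy, rfl⟩
    rw [vnormA_eq_norm_sqrt hA] at hy ⊢
    exact hM y hy
  rcases (norm_nonneg (CFC.sqrt A x)).eq_or_lt with h0 | h0
  · obtain ⟨X, hX⟩ := hB.exists_isFormalAdjoint hA
    have h1 := hX.norm_sq_le x
    rw [show ‖((CFC.sqrt A : H →L[ℂ] H) : H →ₗ[ℂ] H) x‖ = 0 from h0.symm, mul_zero] at h1
    rw [← h0, mul_zero]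
    exact (pow_eq_zero_iff two_ne_zero).1 (le_antisymm h1 (sq_nonneg _)) |>.le
  · set n := ‖CFC.sqrt A x‖ with hn
    have hnorm : ‖((n⁻¹ : ℝ) : ℂ)‖ = n⁻¹ := by
      rw [Complex.norm_real, Real.norm_of_nonneg (by positivity)]
    have h1 : vnormA A (B (((n⁻¹ : ℝ) : ℂ) • x)) ≤ opNormA A B := by
      refine le_csSup hbdd ⟨_, ?_, rfl⟩
      rw [vnormA_eq_norm_sqrt hA, map_smul, norm_smul, hnorm, ← hn, inv_mul_cancel₀ h0.ne']
    rwa [vnormA_eq_norm_sqrt hA, map_smul, map_smul, norm_smul, hnorm,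
      inv_mul_le_iff₀ h0, mul_comm] at h1

theorem HasAAdjoint.norm_inner_sqrt_le (hA : A.IsPositive) (hB : HasAAdjoint A B) (x : H) :
    ‖inner ℂ (CFC.sqrt A (B x)) (CFC.sqrt A x)‖ ≤ wA A B * ‖CFC.sqrt A x‖ ^ 2 := by
  have hbdd : BddAbove {c : ℝ | ∃ x : H, vnormA A x = 1 ∧ c = ‖innA A (B x) x‖} := by
    refine ⟨opNormA A B, ?_⟩
    rintro _ ⟨y, hy, rfl⟩
    rw [vnormA_eq_norm_sqrt hA] at hy
    rw [innA_eq_inner_sqrt hA]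
    simpa [hy] using (norm_inner_le_norm (𝕜 := ℂ) (CFC.sqrt A (B y)) (CFC.sqrt A y)).trans
      (mul_le_mul_of_nonneg_right (hB.norm_sqrt_le hA y) (norm_nonneg _))
  rcases (norm_nonneg (CFC.sqrt A x)).eq_or_lt with h0 | h0
  · rw [norm_eq_zero.1 h0.symm]; simp
  · set n := ‖CFC.sqrt A x‖ with hn
    have hnorm : ‖((n⁻¹ : ℝ) : ℂ)‖ = n⁻¹ := by
      rw [Complex.norm_real, Real.norm_of_nonneg (by positivity)]
    have h1 : ‖innA A (B (((n⁻¹ : ℝ) : ℂ) • x)) (((n⁻¹ : ℝ) : ℂ) • x)‖ ≤ wA A B := by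
      refine le_csSup hbdd ⟨_, ?_, rfl⟩
      rw [vnormA_eq_norm_sqrt hA, map_smul, norm_smul, hnorm, ← hn, inv_mul_cancel₀ h0.ne']
    rw [innA_eq_inner_sqrt hA, map_smul, map_smul, map_smul, inner_smul_left, inner_smul_right,
      norm_mul, norm_mul, RCLike.norm_conj, hnorm, inv_mul_le_iff₀ h0, inv_mul_le_iff₀ h0] at h1
    linarith

end Operators

theorem stmt1 (A : H →L[ℂ] H) (hA : A.IsPositive) (hA0 : A ≠ 0)
    (T S : H →L[ℂ] H) (hT : HasAAdjoint A T) (hS : HasAAdjoint A S) :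
    wA A (T * S) ≤ (1 / 2) * wA A (S * T) +
      (1 / 4) * (opNormA A T * opNormA A S + opNormA A (T * S)) := by
  have hTS := hT.mul hS
  have hp := opNormA_nonneg A (T * S)
  have hw := wA_nonneg A (S * T)
  have ht := opNormA_nonneg A T
  have hs := opNormA_nonneg A S
  by_contra! hlt
  have hω : 0 < wA A (T * S) := lt_of_le_of_lt (by positivity) hlt
  have happ : ∀ ε > 0, ∃ x, ‖CFC.sqrt A x‖ = 1 ∧
      wA A (T * S) - ε ≤ ‖inner ℂ (CFC.sqrt A (T (S x))) (CFC.sqrt A x)‖ := by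
    intro ε hε
    have hne : {c : ℝ | ∃ x : H, vnormA A x = 1 ∧ c = ‖innA A ((T * S) x) x‖}.Nonempty := by
      by_contra hne
      rw [Set.not_nonempty_iff_eq_empty] at hne
      rw [wA, hne, Real.sSup_empty] at hω
      exact hω.false
    obtain ⟨_, ⟨x, hx, rfl⟩, hxε⟩ := exists_lt_of_lt_csSup hne (sub_lt_self (wA A (T * S)) hε)
    rw [vnormA_eq_norm_sqrt hA] at hx
    rw [innA_eq_inner_sqrt hA] at hxε
    exact ⟨x, hx, hxε.le⟩
  have hpos : 0 < opNormA A T * opNormA A S := by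
    by_contra! h0
    obtain ⟨x, hx, hxε⟩ := happ (wA A (T * S) / 2) (by positivity)
    have h1 := norm_inner_le_norm (𝕜 := ℂ) (CFC.sqrt A (T (S x))) (CFC.sqrt A x)
    have h2 := hT.norm_sqrt_le hA (S x)
    have h3 := mul_le_mul_of_nonneg_left (hS.norm_sqrt_le hA x) ht
    rw [hx] at h1 h3
    linarith
  obtain ⟨X, hX⟩ := hT.exists_isFormalAdjoint hA
  obtain ⟨Y, hY⟩ := hS.exists_isFormalAdjoint hA
  have h := numericalRadius_mul_le (pos_of_mul_pos_left hpos hs)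
    (pos_of_mul_pos_right hpos ht) hp hω hX hY (hT.norm_sqrt_le hA) (hS.norm_sqrt_le hA)
    (hTS.norm_sqrt_le hA) ((hS.mul hT).norm_inner_sqrt_le hA) (hTS.norm_inner_sqrt_le hA) happ
  linarith
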